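/- Let n ≥ 1 and let y₁, …, yₙ be positive real numbers; extend the sequence by y₀ = y_{n+1} = y_{n+2} = 0. For 0 ≤ i ≤ n+1 set FS_i = 1 + y_i and FP_i = 1 + y_{i+1} + y_i·y_{i+1}, and define v_P(i) = FS_{i+1}/FP_i, v_S(i) = FP_i/(FS_{i+1}·FS_i), and v_Q(i) = y_i·FS_{i−1}/FP_{i−1}. Then, with L the Rogers dilogarithm, ∑_{i=1}^{n−1} L(1 − v_P(i)) + ∑_{i=1}^{n} L(1 − v_Q(i)) + ∑_{i=1}^{n} L(1 − v_S(i)) = n·π²/6. (Each argument 1 − v lies in the open interval (0,1).) -/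

import Mathlib

/-!
Write `a = y i`, `b = y (i + 1)`. For `1 ≤ i ≤ n - 1` the three arguments `1 - vP i`, `1 - vS i`,
`1 - vQ (i + 1)` are `ab / (1 + b + ab)`, `a / ((1 + a)(1 + b))` and `1 / (1 + b + ab)`; these are
the three terms on one side of Abel's five-term relation
`L(x) + L(z) = L(xz) + L(x(1-z)/(1-xz)) + L(z(1-x)/(1-xz))` (`rogersL_five_term`) at
`x = a / (1 + a)`, `z = 1 / (1 + b)`. By the reflection formula `L(x) + L(1 - x) = π² / 6`
(`rogersL_reflection`), the triple therefore contributes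
`L(a / (1 + a)) - L(b / (1 + b)) + π² / 6`. The sum over `i` telescopes, and the boundary terms
combine with the two remaining ones, `1 - vQ 1 = 1 / (1 + y 1)` and `1 - vS n = y n / (1 + y n)`.

Both functional equations follow by differentiating in `x` on `(0, 1)` and evaluating at `x = 0`.
This needs continuity of `L` on `[0, 1]` and `L(1) = π² / 6`, which come from the power series
`∑ x ^ k / k ^ 2` of the dilogarithm and the value of `ζ(2)`.
-/

/-- The Rogers dilogarithm, for `0 < x < 1`:
`L(x) = −∫₀ˣ log(1−t)/t dt + (1/2)·log x · log(1−x)`. -/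
noncomputable def rogersL (x : ℝ) : ℝ :=
  (-(∫ t in (0:ℝ)..x, Real.log (1 - t) / t)) + (1 / 2) * Real.log x * Real.log (1 - x)

/-! ### The dilogarithm series -/

/-- The dilogarithm `∑_{k ≥ 1} x ^ k / k ^ 2`, with the index shifted by one. -/
noncomputable def dilogSeries (x : ℝ) : ℝ := ∑' k : ℕ, x ^ (k + 1) / ((k : ℝ) + 1) ^ 2

lemma dilogSeries_zero : dilogSeries 0 = 0 := by simp [dilogSeries]

lemma hasSum_shifted_zeta_two :
    HasSum (fun k : ℕ => 1 / ((k : ℝ) + 1) ^ 2) (Real.pi ^ 2 / 6) := by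
  have h := (hasSum_nat_add_iff' 1).mpr hasSum_zeta_two
  simpa using h

lemma dilogSeries_one : dilogSeries 1 = Real.pi ^ 2 / 6 := by
  simpa [dilogSeries] using hasSum_shifted_zeta_two.tsum_eq

lemma continuousOn_dilogSeries : ContinuousOn dilogSeries (Set.Icc 0 1) := by
  refine continuousOn_tsum (fun k => by fun_prop) hasSum_shifted_zeta_two.summable ?_
  intro k x hx
  rw [Real.norm_of_nonneg (div_nonneg (pow_nonneg hx.1 _) (by positivity))]
  gcongr
  exact pow_le_one₀ hx.1 hx.2

lemma hasDerivAt_dilogSeries {x : ℝ} (hx : x ∈ Set.Ioo (0 : ℝ) 1) :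
    HasDerivAt dilogSeries (-(Real.log (1 - x) / x)) x := by
  obtain ⟨r, hxr, hr1⟩ := exists_between hx.2
  have hr0 : 0 < r := hx.1.trans hxr
  have key : HasDerivAt dilogSeries (∑' k : ℕ, x ^ k / ((k : ℝ) + 1)) x := by
    refine hasDerivAt_tsum_of_isPreconnected (u := fun k => r ^ k) (t := Set.Ioo (-r) r)
      (g := fun (k : ℕ) z => z ^ (k + 1) / ((k : ℝ) + 1) ^ 2)
      (g' := fun (k : ℕ) z => z ^ k / ((k : ℝ) + 1)) (y₀ := 0)
      (summable_geometric_of_lt_one hr0.le hr1) isOpen_Ioo isPreconnected_Ioo ?_ ?_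
      ⟨by linarith, hr0⟩ (by simp) ⟨by linarith [hx.1], hxr⟩
    · intro k z _
      have h := (hasDerivAt_pow (k + 1) z).div_const (((k : ℝ) + 1) ^ 2)
      refine h.congr_deriv ?_
      have : (k : ℝ) + 1 ≠ 0 := by positivity
      push_cast
      field_simp
    · intro k z hz
      have hk : (1 : ℝ) ≤ (k : ℝ) + 1 := by linarith [Nat.cast_nonneg (α := ℝ) k]
      rw [norm_div, norm_pow, Real.norm_of_nonneg (by positivity : (0 : ℝ) ≤ (k : ℝ) + 1)]
      refine (div_le_self (by positivity) hk).trans ?_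
      gcongr
      exact (abs_lt.mpr hz).le
  have hs := Real.hasSum_pow_div_log_of_abs_lt_one (abs_lt.mpr ⟨by linarith [hx.1], hx.2⟩)
  have hval : ∑' k : ℕ, x ^ k / ((k : ℝ) + 1) = -(Real.log (1 - x) / x) := by
    have h := (hs.div_const x).tsum_eq
    rw [neg_div] at h
    rw [← h]
    refine tsum_congr fun k => ?_
    have := hx.1.ne'
    rw [pow_succ]
    field_simp
  rwa [hval] at key

/-! ### Regularity of the Rogers dilogarithm -/

/-- The integral in the definition of `rogersL` is the power series, including at the endpoint
`x = 1`, where the integrand is unbounded. -/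
lemma rogersL_eq {x : ℝ} (hx : x ∈ Set.Icc (0 : ℝ) 1) :
    rogersL x = dilogSeries x + 1 / 2 * (Real.log x * Real.log (1 - x)) := by
  have hc : ContinuousOn dilogSeries (Set.Icc 0 x) :=
    continuousOn_dilogSeries.mono (Set.Icc_subset_Icc_right hx.2)
  have hd : ∀ t ∈ Set.Ioo 0 x, HasDerivAt dilogSeries (-(Real.log (1 - t) / t)) t :=
    fun t ht => hasDerivAt_dilogSeries ⟨ht.1, ht.2.trans_le hx.2⟩
  -- Integrability is automatic, the derivative being nonnegative.
  have hi : IntervalIntegrable (fun t => -(Real.log (1 - t) / t)) MeasureTheory.volume 0 x := by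
    apply intervalIntegral.intervalIntegrable_deriv_of_nonneg (g := dilogSeries)
    · rwa [Set.uIcc_of_le hx.1]
    · simpa [hx.1] using fun t h1 h2 => hd t ⟨h1, h2⟩
    · intro t ht
      rw [min_eq_left hx.1, max_eq_right hx.1] at ht
      rw [neg_nonneg]
      exact div_nonpos_of_nonpos_of_nonneg
        (Real.log_nonpos (by linarith [ht.2, hx.2]) (by linarith [ht.1])) ht.1.le
  have h := intervalIntegral.integral_eq_sub_of_hasDerivAt_of_le hx.1 hc hd hi
  rw [intervalIntegral.integral_neg, dilogSeries_zero, sub_zero] at h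
  rw [rogersL, h]
  ring

lemma rogersL_zero : rogersL 0 = 0 := by simp [rogersL]

lemma rogersL_one : rogersL 1 = Real.pi ^ 2 / 6 := by
  rw [rogersL_eq (by simp), dilogSeries_one]
  simp

lemma hasDerivAt_rogersL {x : ℝ} (hx : x ∈ Set.Ioo (0 : ℝ) 1) :
    HasDerivAt rogersL (-(1 / 2) * (Real.log (1 - x) / x + Real.log x / (1 - x))) x := by
  have h0 := hx.1.ne'
  have h1 : 1 - x ≠ 0 := by linarith [hx.2]
  have hl := (Real.hasDerivAt_log h0).mul (((hasDerivAt_id x).const_sub 1).log h1)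
  have h := (hasDerivAt_dilogSeries hx).add (hl.const_mul (1 / 2))
  have he : rogersL =ᶠ[nhds x]
      fun x => dilogSeries x + 1 / 2 * (Real.log x * Real.log (1 - x)) := by
    filter_upwards [Ioo_mem_nhds hx.1 hx.2] with t ht
    exact rogersL_eq ⟨ht.1.le, ht.2.le⟩
  refine HasDerivAt.congr_of_eventuallyEq ?_ he
  refine h.congr_deriv ?_
  simp only [id]
  field_simp
  ring

/-- At `0` the product is `x log x` times the difference quotient of `log (1 - x)`. -/
lemma continuousAt_log_mul_log_zero :
    ContinuousAt (fun x : ℝ => Real.log x * Real.log (1 - x)) 0 := by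
  have hd : DifferentiableAt ℝ (fun x : ℝ => Real.log (1 - x)) 0 := by
    refine DifferentiableAt.log (by fun_prop) (by norm_num)
  have hc := (Real.continuous_mul_log.continuousAt (x := 0)).mul
    (continuousAt_dslope_same.mpr hd)
  refine hc.congr (Filter.Eventually.of_forall fun x => ?_)
  have h := sub_smul_dslope (fun x : ℝ => Real.log (1 - x)) 0 x
  simp only [sub_zero, Real.log_one, smul_eq_mul] at h
  change x * Real.log x * dslope (fun x : ℝ => Real.log (1 - x)) 0 x =
    Real.log x * Real.log (1 - x)
  rw [← h]
  ring

lemma continuous_log_mul_log : Continuous (fun x : ℝ => Real.log x * Real.log (1 - x)) := by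
  rw [continuous_iff_continuousAt]
  intro x
  by_cases h0 : x = 0
  · subst h0
    exact continuousAt_log_mul_log_zero
  by_cases h1 : x = 1
  · -- The substitution `x ↦ 1 - x` swaps the two factors.
    subst h1
    have h := ContinuousAt.comp (x := (1 : ℝ)) (f := fun x : ℝ => 1 - x)
      (by simpa using continuousAt_log_mul_log_zero) (by fun_prop)
    refine h.congr (Filter.Eventually.of_forall fun x => ?_)
    simp [mul_comm]
  · have : 1 - x ≠ 0 := sub_ne_zero.mpr (Ne.symm h1)
    fun_prop (disch := assumption)

lemma continuousOn_rogersL : ContinuousOn rogersL (Set.Icc 0 1) :=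
  (continuousOn_dilogSeries.add (continuous_log_mul_log.const_mul (1 / 2)).continuousOn).congr
    fun _ hx => rogersL_eq hx

/-! ### Functional equations -/

lemma eq_of_hasDerivAt_zero {f : ℝ → ℝ} {a b : ℝ} (hab : a < b)
    (hc : ContinuousOn f (Set.Icc a b)) (hd : ∀ t ∈ Set.Ioo a b, HasDerivAt f 0 t) :
    f b = f a := by
  obtain ⟨c, -, h⟩ := exists_hasDerivAt_eq_slope f (fun _ => 0) hab hc hd
  rcases div_eq_zero_iff.mp h.symm with h | h <;> linarith

/-- Euler's reflection formula. -/
lemma rogersL_reflection {x : ℝ} (hx : x ∈ Set.Ioo (0 : ℝ) 1) :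
    rogersL x + rogersL (1 - x) = Real.pi ^ 2 / 6 := by
  have h := eq_of_hasDerivAt_zero (f := fun t => rogersL t + rogersL (1 - t)) hx.1 ?_ ?_
  · simpa [rogersL_zero, rogersL_one] using h
  · refine ContinuousOn.add (continuousOn_rogersL.mono (Set.Icc_subset_Icc_right hx.2.le)) ?_
    refine continuousOn_rogersL.comp (by fun_prop) ?_
    intro t ht
    exact ⟨by linarith [ht.2, hx.2], by linarith [ht.1]⟩
  · intro t ht
    have ht1 : t < 1 := ht.2.trans hx.2
    have h1 : 1 - t ∈ Set.Ioo (0 : ℝ) 1 := ⟨by linarith, by linarith [ht.1]⟩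
    have h := (hasDerivAt_rogersL ⟨ht.1, ht1⟩).add
      ((hasDerivAt_rogersL h1).comp t ((hasDerivAt_id t).const_sub 1))
    refine h.congr_deriv ?_
    rw [sub_sub_cancel]
    ring

/-- Abel's five-term relation. -/
lemma rogersL_five_term {x z : ℝ} (hx : x ∈ Set.Ioo (0 : ℝ) 1) (hz : z ∈ Set.Ioo (0 : ℝ) 1) :
    rogersL x + rogersL z = rogersL (x * z) + rogersL (x * (1 - z) / (1 - x * z)) +
      rogersL (z * (1 - x) / (1 - x * z)) := by
  obtain ⟨hz0, hz1⟩ := hz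
  have hden : ∀ t, 0 ≤ t → t < 1 → 0 < 1 - t * z := fun t h0 h1 => by nlinarith
  have h := eq_of_hasDerivAt_zero (f := fun t => rogersL t - rogersL (t * z)
    - rogersL (t * (1 - z) / (1 - t * z)) - rogersL (z * (1 - t) / (1 - t * z))) hx.1 ?_ ?_
  · simp only [zero_mul, sub_zero, mul_one, div_one, rogersL_zero] at h
    linarith
  · have hne : ∀ t ∈ Set.Icc 0 x, 1 - t * z ≠ 0 :=
      fun t ht => (hden t ht.1 (ht.2.trans_lt hx.2)).ne'
    refine ((ContinuousOn.sub ?_ ?_).sub ?_).sub ?_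
    · exact continuousOn_rogersL.mono (Set.Icc_subset_Icc_right hx.2.le)
    · refine continuousOn_rogersL.comp (by fun_prop) ?_
      intro t ht
      have := ht.2.trans_lt hx.2
      exact ⟨mul_nonneg ht.1 hz0.le, by linarith [hden t ht.1 this]⟩
    · refine continuousOn_rogersL.comp (ContinuousOn.div (by fun_prop) (by fun_prop) hne) ?_
      intro t ht
      have h1 := ht.2.trans_lt hx.2
      have hp := hden t ht.1 h1
      refine ⟨div_nonneg (mul_nonneg ht.1 (by linarith)) hp.le, ?_⟩
      rw [div_le_one hp]
      nlinarith
    · refine continuousOn_rogersL.comp (ContinuousOn.div (by fun_prop) (by fun_prop) hne) ?_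
      intro t ht
      have h1 := ht.2.trans_lt hx.2
      have hp := hden t ht.1 h1
      refine ⟨div_nonneg (mul_nonneg hz0.le (by linarith)) hp.le, ?_⟩
      rw [div_le_one hp]
      nlinarith
  · intro t ht
    have ht0 : 0 < t := ht.1
    have ht1 : t < 1 := ht.2.trans hx.2
    have hp := hden t ht0.le ht1
    have e2 : 1 - t * (1 - z) / (1 - t * z) = (1 - t) / (1 - t * z) := by
      field_simp
      ring
    have e3 : 1 - z * (1 - t) / (1 - t * z) = (1 - z) / (1 - t * z) := by
      rw [eq_div_iff hp.ne', sub_mul, div_mul_cancel₀ _ hp.ne']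
      ring
    have ht' : 0 < 1 - t := by linarith
    have hz' : 0 < 1 - z := by linarith
    have m1 : t * z ∈ Set.Ioo (0 : ℝ) 1 := ⟨by positivity, by linarith⟩
    have m2 : t * (1 - z) / (1 - t * z) ∈ Set.Ioo (0 : ℝ) 1 := by
      have : 0 < (1 - t) / (1 - t * z) := by positivity
      exact ⟨by positivity, by linarith⟩
    have m3 : z * (1 - t) / (1 - t * z) ∈ Set.Ioo (0 : ℝ) 1 := by
      have : 0 < (1 - z) / (1 - t * z) := by positivity
      exact ⟨by positivity, by linarith⟩
    have dt := hasDerivAt_id t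
    have dden : HasDerivAt (fun t => 1 - t * z) (-(1 * z)) t := (dt.mul_const z).const_sub 1
    have d1 := (hasDerivAt_rogersL m1).comp t (dt.mul_const z)
    have d2 := (hasDerivAt_rogersL m2).comp t ((dt.mul_const (1 - z)).div dden hp.ne')
    have d3 := (hasDerivAt_rogersL m3).comp t (((dt.const_sub 1).const_mul z).div dden hp.ne')
    have h := (((hasDerivAt_rogersL ⟨ht0, ht1⟩).sub d1).sub d2).sub d3
    refine h.congr_deriv ?_
    simp only [id]
    -- Once expanded, the logarithms enter linearly: an identity of rational functions remains.
    rw [e2, e3, Real.log_div (by positivity) hp.ne', Real.log_div (by positivity) hp.ne',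
      Real.log_div (by positivity) hp.ne', Real.log_div (by positivity) hp.ne',
      Real.log_mul ht0.ne' hz0.ne', Real.log_mul ht0.ne' hz'.ne', Real.log_mul hz0.ne' ht'.ne']
    generalize Real.log t = A
    generalize Real.log z = B
    generalize Real.log (1 - t) = C
    generalize Real.log (1 - z) = D
    generalize Real.log (1 - t * z) = E
    field_simp
    ring

/-! ### The telescoping sum -/

lemma div_one_add_mem {a : ℝ} (ha : 0 < a) : a / (1 + a) ∈ Set.Ioo (0 : ℝ) 1 :=
  ⟨by positivity, by rw [div_lt_one (by positivity)]; linarith⟩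

lemma one_div_one_add {a : ℝ} (ha : 0 < a) : 1 / (1 + a) = 1 - a / (1 + a) := by
  field_simp
  ring

/-- The contribution of `1 - vP i`, `1 - vQ (i + 1)`, `1 - vS i`, where `a = y i` and
`b = y (i + 1)`. -/
lemma rogersL_triple {a b : ℝ} (ha : 0 < a) (hb : 0 < b) :
    rogersL (a * b / (1 + b + a * b)) + rogersL (1 / (1 + b + a * b)) +
      rogersL (a / ((1 + b) * (1 + a))) =
    rogersL (a / (1 + a)) - rogersL (b / (1 + b)) + Real.pi ^ 2 / 6 := by
  have hb' := div_one_add_mem hb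
  have h5 := rogersL_five_term (x := a / (1 + a)) (z := 1 - b / (1 + b)) (div_one_add_mem ha)
    ⟨by linarith [hb'.2], by linarith [hb'.1]⟩
  have hr := rogersL_reflection hb'
  rw [← one_div_one_add hb] at h5 hr
  have hden : 1 - a / (1 + a) * (1 / (1 + b)) = (1 + b + a * b) / ((1 + b) * (1 + a)) := by
    field_simp
    ring
  have e1 : a / (1 + a) * (1 / (1 + b)) = a / ((1 + b) * (1 + a)) := by
    field_simp
  have e2 : a / (1 + a) * (1 - 1 / (1 + b)) / (1 - a / (1 + a) * (1 / (1 + b)))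
      = a * b / (1 + b + a * b) := by
    rw [hden]
    field_simp
    ring
  have e3 : 1 / (1 + b) * (1 - a / (1 + a)) / (1 - a / (1 + a) * (1 / (1 + b)))
      = 1 / (1 + b + a * b) := by
    rw [hden]
    field_simp
    ring
  rw [e2, e3, e1] at h5
  linarith

/-- The identity for `n = m + 1`, with the arguments `1 - v` written out and the terms `1 - vQ 1`
and `1 - vS n` split off. -/
lemma rogersL_telescope (y : ℕ → ℝ) (m : ℕ) (hy : ∀ i, 1 ≤ i → i ≤ m + 1 → 0 < y i) :
    (∑ i ∈ Finset.Icc 1 m, (rogersL (y i * y (i + 1) / (1 + y (i + 1) + y i * y (i + 1))) +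
        rogersL (1 / (1 + y (i + 1) + y i * y (i + 1))) +
        rogersL (y i / ((1 + y (i + 1)) * (1 + y i))))) +
      rogersL (1 / (1 + y 1)) + rogersL (y (m + 1) / (1 + y (m + 1))) =
    (m + 1) * Real.pi ^ 2 / 6 := by
  induction m with
  | zero =>
    have h1 := hy 1 le_rfl le_rfl
    have h := rogersL_reflection (div_one_add_mem h1)
    rw [← one_div_one_add h1] at h
    simp only [Finset.Icc_eq_empty_of_lt Nat.zero_lt_one, Finset.sum_empty]
    push_cast
    linarith
  | succ m ih =>
    have ih := ih fun i h1 h2 => hy i h1 (by omega)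
    rw [Finset.sum_Icc_succ_top (by omega),
      rogersL_triple (hy (m + 1) (by omega) (by omega)) (hy (m + 1 + 1) (by omega) le_rfl)]
    push_cast
    linarith

/-- The dilogarithm identity `∑_X L(1 − v_X) = n·π²/6` for the Pellytope algebra
(the path algebra of the quiver `1 ← 2 ← ⋯ ← n` modulo all paths of length two,
which has `n` simple modules and `3n − 1` indecomposable two-term complexes of
projectives); each of the arguments `1 − v` lies in `(0,1)`. -/
theorem pellytope_dilogarithm_identity (n : ℕ) (hn : 1 ≤ n) (y : ℕ → ℝ)
    (hy : ∀ i, 1 ≤ i → i ≤ n → 0 < y i)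
    (hy0 : y 0 = 0) (hyn1 : y (n + 1) = 0) (hyn2 : y (n + 2) = 0)
    (FS FP vP vS vQ : ℕ → ℝ)
    (hFS : ∀ i, i ≤ n + 1 → FS i = 1 + y i)
    (hFP : ∀ i, i ≤ n + 1 → FP i = 1 + y (i + 1) + y i * y (i + 1))
    (hvP : ∀ i, i ≤ n + 1 → vP i = FS (i + 1) / FP i)
    (hvS : ∀ i, i ≤ n + 1 → vS i = FP i / (FS (i + 1) * FS i))
    (hvQ : ∀ i, 1 ≤ i → i ≤ n → vQ i = y i * FS (i - 1) / FP (i - 1)) :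
    (∀ i ∈ Finset.Icc 1 (n - 1), 1 - vP i ∈ Set.Ioo (0:ℝ) 1) ∧
    (∀ i ∈ Finset.Icc 1 n, 1 - vQ i ∈ Set.Ioo (0:ℝ) 1) ∧
    (∀ i ∈ Finset.Icc 1 n, 1 - vS i ∈ Set.Ioo (0:ℝ) 1) ∧
    (∑ i ∈ Finset.Icc 1 (n - 1), rogersL (1 - vP i)) +
      (∑ i ∈ Finset.Icc 1 n, rogersL (1 - vQ i)) +
      (∑ i ∈ Finset.Icc 1 n, rogersL (1 - vS i)) = n * Real.pi ^ 2 / 6 := by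
  obtain ⟨m, rfl⟩ : ∃ m, n = m + 1 := ⟨n - 1, by omega⟩
  simp only [Nat.add_sub_cancel]
  have hy' : ∀ i, i ≤ m + 2 → 0 ≤ y i := by
    intro i hi
    rcases Nat.eq_zero_or_pos i with rfl | h0
    · exact hy0.ge
    rcases Nat.lt_or_ge (m + 1) i with h | h
    · obtain rfl : i = m + 1 + 1 := by omega
      exact hyn1.ge
    · exact (hy i h0 h).le
  have eP : ∀ i, i ≤ m + 1 →
      1 - vP i = y i * y (i + 1) / (1 + y (i + 1) + y i * y (i + 1)) := by
    intro i hi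
    have h0 := hy' i (by omega)
    have h1 := hy' (i + 1) (by omega)
    rw [hvP i (by omega), hFS (i + 1) (by omega), hFP i (by omega)]
    field_simp
    ring
  have eS : ∀ i, i ≤ m + 1 → 1 - vS i = y i / ((1 + y (i + 1)) * (1 + y i)) := by
    intro i hi
    have h0 := hy' i (by omega)
    have h1 := hy' (i + 1) (by omega)
    rw [hvS i (by omega), hFS (i + 1) (by omega), hFS i (by omega), hFP i (by omega)]
    field_simp
    ring
  have eQ : ∀ i, i ≤ m → 1 - vQ (i + 1) = 1 / (1 + y (i + 1) + y i * y (i + 1)) := by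
    intro i hi
    have h0 := hy' i (by omega)
    have h1 := hy' (i + 1) (by omega)
    rw [hvQ (i + 1) (by omega) (by omega), Nat.add_sub_cancel, hFS i (by omega), hFP i (by omega)]
    field_simp
    ring
  refine ⟨?_, ?_, ?_, ?_⟩
  · intro i hi
    rw [Finset.mem_Icc] at hi
    have h0 := hy i (by omega) (by omega)
    have h1 := hy (i + 1) (by omega) (by omega)
    rw [eP i (by omega)]
    exact ⟨by positivity, by rw [div_lt_one (by positivity)]; linarith⟩
  · intro i hi
    rw [Finset.mem_Icc] at hi
    obtain ⟨j, rfl⟩ : ∃ j, i = j + 1 := ⟨i - 1, by omega⟩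
    have h0 := hy' j (by omega)
    have h1 := hy (j + 1) (by omega) (by omega)
    rw [eQ j (by omega)]
    exact ⟨by positivity, by rw [div_lt_one (by positivity)]; nlinarith⟩
  · intro i hi
    rw [Finset.mem_Icc] at hi
    have h0 := hy i (by omega) (by omega)
    have h1 := hy' (i + 1) (by omega)
    rw [eS i (by omega)]
    exact ⟨by positivity, by rw [div_lt_one (by positivity)]; nlinarith⟩
  · have hQ : ∑ i ∈ Finset.Icc 1 (m + 1), rogersL (1 - vQ i) =
        rogersL (1 - vQ 1) + ∑ i ∈ Finset.Icc 1 m, rogersL (1 - vQ (i + 1)) := by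
      rw [← Finset.Ico_add_one_right_eq_Icc, ← Finset.Ico_add_one_right_eq_Icc,
        Finset.sum_eq_sum_Ico_succ_bot (by omega),
        Finset.sum_Ico_add' (fun i => rogersL (1 - vQ i)) 1 (m + 1) 1]
    have hsP := Finset.sum_congr (rfl : Finset.Icc 1 m = _) fun i hi =>
      congrArg rogersL (eP i (Nat.le_succ_of_le (Finset.mem_Icc.mp hi).2))
    have hsQ := Finset.sum_congr (rfl : Finset.Icc 1 m = _) fun i hi =>
      congrArg rogersL (eQ i (Finset.mem_Icc.mp hi).2)
    have hsS := Finset.sum_congr (rfl : Finset.Icc 1 m = _) fun i hi =>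
      congrArg rogersL (eS i (Nat.le_succ_of_le (Finset.mem_Icc.mp hi).2))
    have key := rogersL_telescope y m hy
    rw [Finset.sum_add_distrib, Finset.sum_add_distrib] at key
    rw [hQ, Finset.sum_Icc_succ_top (by omega : 1 ≤ m + 1),
      hsP, hsQ, hsS,
      eQ 0 (by omega), eS (m + 1) le_rfl, hyn1, hy0]
    simp only [zero_add, zero_mul, add_zero, one_mul]
    push_cast
    linarith
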